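/- Fix a positive integer p, positive integers a < b, set c = a/b ∈ (0,1), and fix an integer N ≥ 0. For a positive integer t set n = a·t and m = b·t. Then there exist a constant C > 0 and a positive integer T such that for all integers t ≥ T (in particular p < n(m−n+1), so that μ0(p,n,m) > 0), |ln μ0(p,n,m) − Σ_{q=0}^N A_{p,q}(c)/n^{2q}| ≤ C·n^{−2(N+1)}. -/

import Mathlib

open Finset
open Finset

/-- Exact `p`-th moment of the GLRT statistic under `H₀`. -/
noncomputable def mu0 (p n m : ℕ) : ℝ :=
  Real.Gamma ((m : ℝ) * n) / ((n : ℝ) ^ p * Real.Gamma ((m : ℝ) * n - p)) *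
    ∏ j ∈ Finset.range n,
      Real.Gamma ((m : ℝ) - n + 1 - p / n + j) / Real.Gamma ((m : ℝ) - n + 1 + j)

/-- Rising factorial `(a)_r = a (a+1) ⋯ (a+r-1)` as a real number. -/
noncomputable def risingFactorial (a : ℕ) (r : ℕ) : ℝ :=
  ∏ i ∈ Finset.range r, ((a : ℝ) + i)

/-- Coefficients `A_{p,q}(c)` of the asymptotic expansion of `ln μ0`. -/
noncomputable def Acoef (p : ℕ) (c : ℝ) : ℕ → ℝ
  | 0 => p - p * (1 - 1 / c) * Real.log (1 - c)
  | 1 => -((p : ℝ) ^ 2 / 2) * Real.log (1 - c)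
          + c * p * (12 - 11 * c + 6 * (1 - (p : ℝ)) * (c - 1)) / (12 * (c - 1))
  | (q + 2) =>
      (c * p) ^ (q + 2) * (c + 12 * p - 12 * c * p - c * ((q + 2 : ℕ) : ℝ) ^ 2)
          / (12 * c * ((q + 2 : ℕ) : ℝ) * (((q + 2 : ℕ) : ℝ) ^ 2 - 1) * (1 - c) ^ (q + 2))
        + (c * p) ^ (q + 2) * (-12 * p + c * (((q + 2 : ℕ) : ℝ) ^ 2 - 1))
          / (12 * c * ((q + 2 : ℕ) : ℝ) * (((q + 2 : ℕ) : ℝ) ^ 2 - 1))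
        - (c ^ (q + 2) / ((q + 2 : ℕ) : ℝ)) * ∑ j ∈ Finset.Icc 1 p, (j : ℝ) ^ (q + 2)
        + ∑ j ∈ Finset.Icc 1 (q + 1),
            (bernoulli (2 * j + 2) : ℝ) * c ^ (2 * j) * risingFactorial (2 * j) (q + 2 - j)
              * (p * c) ^ (q + 2 - j)
              / (4 * j * (j + 1) * (Nat.factorial (q + 2 - j)))
              * (1 - (1 - c) ^ (-(j : ℤ) - (q + 2 : ℤ)))

/-- Coefficients `β_{p,j}(c)` of the asymptotic expansion of `μ0`. -/
noncomputable def bcoef (p : ℕ) (c : ℝ) (j : ℕ) : ℝ :=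
  Real.exp (Acoef p c 0) *
    ∑ i ∈ Finset.univ.filter
        (fun i : Fin j → Fin (j + 1) => ∑ r : Fin j, (r.1 + 1) * (i r).1 = j),
      ∏ r : Fin j, (Acoef p c (r.1 + 1)) ^ (i r).1 / (Nat.factorial (i r).1)


noncomputable def ff : ℕ → ℝ → ℝ
  | 0, z => z ^ 2 / 2 * Real.log z - 3 / 4 * z ^ 2
  | 1, z => z * Real.log z - z
  | 2, z => Real.log z
  | (i + 3), z => (-1) ^ i * (Nat.factorial i : ℝ) * (z ^ (i + 1))⁻¹

lemma hasDerivAt_ff (i : ℕ) (z : ℝ) (hz : 0 < z) : HasDerivAt (ff i) (ff (i + 1) z) z := by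
  match i with
  | 0 =>
    have h1 := ((((hasDerivAt_id z).pow 2).div_const 2).mul (Real.hasDerivAt_log hz.ne')).sub
      (((hasDerivAt_id z).pow 2).const_mul (3 / 4))
    refine HasDerivAt.congr_deriv (f := ff 0) (h1.congr_of_eventuallyEq ?_) ?_
    · exact Filter.Eventually.of_forall fun y => by simp [ff]
    · simp only [ff, id]; field_simp; simp; ring
  | 1 =>
    have h1 := ((hasDerivAt_id z).mul (Real.hasDerivAt_log hz.ne')).sub (hasDerivAt_id z)
    refine HasDerivAt.congr_deriv (f := ff 1) (h1.congr_of_eventuallyEq ?_) ?_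
    · exact Filter.Eventually.of_forall fun y => by simp [ff]
    · simp only [ff, id]; field_simp; ring
  | 2 =>
    refine HasDerivAt.congr_deriv (f := ff 2) ((Real.hasDerivAt_log hz.ne').congr_of_eventuallyEq ?_) ?_
    · exact Filter.Eventually.of_forall fun y => by simp [ff]
    · simp [ff]
  | (i + 3) =>
    have h1 := (((hasDerivAt_id z).pow (i + 1)).inv (by simp [hz.ne'])).const_mul
      ((-1) ^ i * (Nat.factorial i : ℝ))
    refine HasDerivAt.congr_deriv (f := ff (i + 3)) (h1.congr_of_eventuallyEq ?_) ?_
    · exact Filter.Eventually.of_forall fun y => by simp [ff]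
    · simp only [ff, id, Nat.factorial_succ, Pi.pow_apply]
      push_cast
      field_simp
      ring

lemma ff_bound (i : ℕ) (z₀ z : ℝ) (h0 : 0 < z₀) (hz : z₀ ≤ z) :
    |ff (i + 3) z| ≤ (Nat.factorial i : ℝ) / z₀ ^ (i + 1) := by
  have hz' : 0 < z := by linarith
  simp only [ff, abs_mul, abs_pow, abs_neg, abs_one, one_pow, one_mul, abs_inv, abs_of_pos hz',
    Nat.abs_cast]
  rw [div_eq_mul_inv]
  gcongr

lemma ff_taylor (M z₀ z : ℝ) (h0 : 0 < z₀) (hz : z₀ ≤ z) (R : ℕ) : ∀ (i : ℕ),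
    (∀ y, z₀ ≤ y → |ff (i + R) y| ≤ M) → ∀ h : ℝ, z₀ ≤ z + h →
    |ff i (z + h) - ∑ r ∈ range R, ff (i + r) z * h ^ r / (Nat.factorial r)| ≤ M * |h| ^ R := by
  induction R with
  | zero =>
    intro i hM h hh
    simpa using hM _ hh
  | succ R ih =>
    intro i hM h hh
    have hM0 : 0 ≤ M := (abs_nonneg _).trans (hM z hz)
    have key := ih (i + 1) (fun y hy => by
      have := hM y hy
      rwa [show i + (R + 1) = i + 1 + R by ring] at this)
    set s : ℝ → ℝ := fun t => ff i (z + t) -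
      ∑ r ∈ range (R + 1), ff (i + r) z * t ^ r / (Nat.factorial r) with hs
    set s' : ℝ → ℝ := fun t => ff (i + 1) (z + t) -
      ∑ r ∈ range R, ff (i + 1 + r) z * t ^ r / (Nat.factorial r) with hs'
    have hmem : ∀ t ∈ Set.uIcc 0 h, z₀ ≤ z + t ∧ |t| ≤ |h| := by
      intro t ht
      rw [Set.mem_uIcc] at ht
      rcases ht with ht | ht
      · exact ⟨by linarith, by rw [abs_of_nonneg ht.1, abs_of_nonneg (ht.1.trans ht.2)]; exact ht.2⟩
      · exact ⟨by linarith, by rw [abs_of_nonpos ht.2, abs_of_nonpos (ht.1.trans ht.2)]; linarith⟩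
    have hder : ∀ t ∈ Set.uIcc 0 h, HasDerivWithinAt s (s' t) (Set.uIcc 0 h) t := by
      intro t ht
      apply HasDerivAt.hasDerivWithinAt
      apply HasDerivAt.sub
      · have := (hasDerivAt_ff i (z + t) (by linarith [(hmem t ht).1])).comp_const_add z t
        exact this
      · have h1 : HasDerivAt (fun t : ℝ => ∑ r ∈ range (R + 1), ff (i + r) z * t ^ r / (Nat.factorial r))
            (∑ r ∈ range (R + 1), ff (i + r) z * ((r : ℝ) * t ^ (r - 1)) / (Nat.factorial r)) t := by
          apply HasDerivAt.fun_sum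
          intro r _
          exact ((hasDerivAt_pow r t).const_mul _).div_const _
        refine h1.congr_deriv ?_
        rw [Finset.sum_range_succ']
        simp only [Nat.cast_zero, zero_mul, mul_zero, zero_div, add_zero]
        refine Finset.sum_congr rfl fun r _ => ?_
        rw [Nat.factorial_succ, show i + (r + 1) = i + 1 + r by ring]
        have : (Nat.factorial r : ℝ) ≠ 0 := by positivity
        push_cast
        field_simp
    have hb : ∀ t ∈ Set.uIcc 0 h, ‖s' t‖ ≤ M * |h| ^ R := by
      intro t ht
      refine (key t (hmem t ht).1).trans ?_
      have := (hmem t ht).2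
      gcongr
    have := (convex_uIcc 0 h).norm_image_sub_le_of_norm_hasDerivWithin_le hder hb
      (Set.left_mem_uIcc) (Set.right_mem_uIcc)
    have hs0 : s 0 = 0 := by
      simp [hs, Finset.sum_range_succ']
    rw [hs0, sub_zero, sub_zero, Real.norm_eq_abs, Real.norm_eq_abs] at this
    rw [pow_succ, ← mul_assoc]
    exact this

noncomputable def aa (k : ℕ) : ℝ :=
  -(2 * (k : ℝ) - 1) * (bernoulli (2 * k) : ℝ) / (Nat.factorial (2 * k))

open PowerSeries in
lemma ps_identity : (bernoulliPowerSeries ℚ - X * derivative ℚ (bernoulliPowerSeries ℚ)) *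
    (exp ℚ + evalNegHom (exp ℚ) - 2) = X ^ 2 := by
  have h1 := bernoulliPowerSeries_mul_exp_sub_one ℚ
  have h2 := congrArg (derivative ℚ) h1
  have h3 := exp_mul_exp_neg_eq_one (A := ℚ)
  have h4 : derivative ℚ (exp ℚ) = exp ℚ := derivative_exp ℚ
  simp only [Derivation.leibniz, map_sub, h4] at h2
  simp at h2
  set B := bernoulliPowerSeries ℚ
  set e := exp ℚ
  set e' := evalNegHom e
  set B' := derivative ℚ B
  linear_combination ((e - 1) * e' + X * e * e') * h1 - X * (e - 1) * e' * h2 +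
    (X ^ 2 - (e - 2) * (B - X * B')) * h3

lemma sum_even (F : ℕ → ℝ) (hF : ∀ i, F (2 * i + 1) = 0) (r : ℕ) :
    ∑ i ∈ range (2 * r + 1), F i = ∑ k ∈ range (r + 1), F (2 * k) := by
  induction r with
  | zero => simp
  | succ r ih =>
    rw [show 2 * (r + 1) + 1 = 2 * r + 1 + 1 + 1 by ring, sum_range_succ, sum_range_succ, ih, hF,
      sum_range_succ _ (r + 1)]
    simp [mul_add]

open PowerSeries in
lemma aa_conv (r : ℕ) : ∑ k ∈ range (r + 1), aa k * (2 / (Nat.factorial (2 * (r + 1 - k)) : ℝ)) =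
    if r = 0 then 1 else 0 := by
  have h := congrArg (coeff (2 * (r + 1))) ps_identity
  rw [coeff_mul, Finset.Nat.sum_antidiagonal_eq_sum_range_succ_mk, coeff_X_pow] at h
  have h' := congrArg (fun q : ℚ => (q : ℝ)) h
  simp only [Rat.cast_sum] at h'
  have hB : ∀ i, coeff i (bernoulliPowerSeries ℚ - X * derivative ℚ (bernoulliPowerSeries ℚ)) =
      -((i : ℚ) - 1) * bernoulli i / (Nat.factorial i) := by
    intro i
    rcases i with _ | i
    · simp [bernoulliPowerSeries]
    · rw [map_sub, coeff_succ_X_mul, coeff_derivative]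
      simp only [bernoulliPowerSeries, coeff_mk, Algebra.algebraMap_self, RingHom.id_apply]
      push_cast
      ring
  have hE : ∀ i, coeff i (exp ℚ + evalNegHom (exp ℚ) - 2) = 
      (1 + (-1) ^ i) / (Nat.factorial i : ℚ) - if i = 0 then 2 else 0 := by
    intro i
    have : (2 : ℚ⟦X⟧) = C (2 : ℚ) := (map_ofNat C 2).symm
    rw [map_sub, map_add, evalNegHom, coeff_rescale, this, coeff_C, coeff_exp]
    simp
    ring
  simp only [hB, hE] at h'
  rw [sum_even] at h'
  · rw [sum_range_succ] at h'
    simp at h'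
    have hc : (((if r = 0 then 1 else 0 : ℚ)) : ℝ) = if r = 0 then 1 else 0 := by
      split_ifs <;> simp
    rw [← hc, ← h', show (1 + 1 - 2 : ℝ) = 0 by norm_num, mul_zero, add_zero]
    refine sum_congr rfl fun k hk => ?_
    rw [mem_range] at hk
    rw [if_neg (by omega), ← Nat.mul_sub, pow_mul]
    simp only [aa]
    norm_num
  · intro i
    rcases i with _ | i
    · simp
    · rw [bernoulli_eq_zero_of_odd ⟨i + 1, by ring⟩ (by omega)]
      simp

noncomputable def Lam (K : ℕ) (z : ℝ) : ℝ := ∑ k ∈ range (K + 1), aa k * ff (2 * k) z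

/-- second central difference of one `ff`. -/
lemma ff_second_diff (i L : ℕ) (M z : ℝ) (hz : 2 ≤ z)
    (hM : ∀ y, z / 2 ≤ y → |ff (i + 2 * (L + 1)) y| ≤ M) :
    |ff i (z + 1) + ff i (z - 1) - 2 * ff i z -
      ∑ l ∈ range L, ff (i + 2 * (l + 1)) z * (2 / (Nat.factorial (2 * (l + 1)) : ℝ))| ≤ 2 * M := by
  have h1 := ff_taylor M (z / 2) z (by linarith) (by linarith) _ i hM 1 (by linarith)
  have h2 := ff_taylor M (z / 2) z (by linarith) (by linarith) _ i hM (-1) (by linarith)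
  have key : ∑ r ∈ range (2 * (L + 1)), ff (i + r) z * 1 ^ r / (Nat.factorial r) +
      ∑ r ∈ range (2 * (L + 1)), ff (i + r) z * (-1) ^ r / (Nat.factorial r) = 2 * ff i z +
      ∑ l ∈ range L, ff (i + 2 * (l + 1)) z * (2 / (Nat.factorial (2 * (l + 1)) : ℝ)) := by
    rw [← sum_add_distrib, show 2 * (L + 1) = 2 * L + 1 + 1 by ring, sum_range_succ,
      sum_even _ _ L, sum_range_succ']
    · rw [show ff (i + (2 * L + 1)) z * 1 ^ (2 * L + 1) / (Nat.factorial (2 * L + 1)) +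
        ff (i + (2 * L + 1)) z * (-1) ^ (2 * L + 1) / (Nat.factorial (2 * L + 1)) = 0 by
          rw [pow_succ (-1 : ℝ), pow_mul]; simp; ring]
      simp only [pow_mul]
      norm_num
      rw [add_comm, ← two_mul]
      congr 1
      exact sum_congr rfl fun l _ => by ring
    · intro j
      rw [pow_succ (-1 : ℝ), pow_mul]; simp; ring
  rw [abs_neg, abs_one, one_pow, mul_one] at h2
  rw [abs_one, one_pow, mul_one] at h1
  rw [← sub_eq_add_neg] at h2
  rw [abs_le] at *
  constructor <;> linarith [h1.1, h1.2, h2.1, h2.2]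

lemma Lam_second_diff (K : ℕ) : ∃ C : ℝ, 0 ≤ C ∧ ∀ z : ℝ, 2 ≤ z →
    |Lam K (z + 1) + Lam K (z - 1) - 2 * Lam K z - Real.log z| ≤ C / z ^ (2 * K + 2) := by
  refine ⟨∑ k ∈ range (K + 1), |aa k| * (2 * (Nat.factorial (2 * K + 1) * 2 ^ (2 * K + 2))),
    by positivity, fun z hz => ?_⟩
  have hmain : ∑ k ∈ range (K + 1), ∑ l ∈ range (K + 1 - k),
      aa k * (ff (2 * k + 2 * (l + 1)) z * (2 / (Nat.factorial (2 * (l + 1)) : ℝ))) = Real.log z := by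
    rw [← sum_range_diag_flip (K + 1) (fun k l =>
      aa k * (ff (2 * k + 2 * (l + 1)) z * (2 / (Nat.factorial (2 * (l + 1)) : ℝ))))]
    have : ∀ r ∈ range (K + 1), ∑ k ∈ range (r + 1), aa k * (ff (2 * k + 2 * (r - k + 1)) z *
        (2 / (Nat.factorial (2 * (r - k + 1)) : ℝ))) = ff (2 * (r + 1)) z * if r = 0 then 1 else 0 := by
      intro r _
      rw [← aa_conv r, mul_sum]
      refine sum_congr rfl fun k hk => ?_
      rw [mem_range] at hk
      rw [show 2 * k + 2 * (r - k + 1) = 2 * (r + 1) by omega,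
        show r - k + 1 = r + 1 - k by omega]
      ring
    rw [sum_congr rfl this]
    simp [ff]
  rw [← hmain, Lam, Lam, Lam, mul_sum, ← sum_add_distrib, ← sum_sub_distrib, ← sum_sub_distrib,
    sum_div]
  refine (abs_sum_le_sum_abs _ _).trans (sum_le_sum fun k hk => ?_)
  rw [mem_range] at hk
  rw [← mul_sum]
  have := ff_second_diff (2 * k) (K + 1 - k) ((Nat.factorial (2 * K + 1) : ℝ) / (z / 2) ^ (2 * K + 2))
    z hz (fun y hy => by
      rw [show 2 * k + 2 * (K + 1 - k + 1) = 2 * K + 1 + 3 by omega]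
      exact ff_bound (2 * K + 1) (z / 2) y (by linarith) hy)
  rw [show ∀ a b c d e : ℝ, a * b + a * c - 2 * (a * d) - a * e = a * (b + c - 2 * d - e) by
    intros; ring, abs_mul, mul_div_assoc]
  gcongr
  refine this.trans (le_of_eq ?_)
  rw [div_pow]
  field_simp

lemma Lam_mixed_diff (K : ℕ) : ∃ C : ℝ, 0 ≤ C ∧ ∀ z x : ℝ, 4 ≤ z → 0 ≤ x → x ≤ 1 →
    |Lam K z - Lam K (z - 1) - Lam K (z - x) + Lam K (z - 1 - x) - x * Real.log z| ≤ C / z := by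
  -- one `ff`
  have one : ∀ i : ℕ, ∃ C : ℝ, 0 ≤ C ∧ ∀ z x : ℝ, 4 ≤ z → 0 ≤ x → x ≤ 1 →
    |ff i z - ff i (z - 1) - ff i (z - x) + ff i (z - 1 - x) - x * ff (i + 2) z| ≤ C / z := by
    intro i
    refine ⟨10 * (Nat.factorial i * 2 ^ (i + 1)), by positivity, fun z x hz hx0 hx1 => ?_⟩
    set M : ℝ := (Nat.factorial i : ℝ) / (z / 2) ^ (i + 1) with hMdef
    have hM0 : 0 ≤ M := by positivity
    have hM : ∀ y, z / 2 ≤ y → |ff (i + 3) y| ≤ M := fun y hy =>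
      ff_bound i (z / 2) y (by linarith) hy
    have hMz : M ≤ Nat.factorial i * 2 ^ (i + 1) / z := by
      rw [hMdef, div_pow, div_div_eq_mul_div]
      gcongr
      exact le_self_pow₀ (by linarith) (by omega)
    have h1 := ff_taylor M (z / 2) z (by linarith) (by linarith) 3 i hM (-1) (by linarith)
    have h2 := ff_taylor M (z / 2) z (by linarith) (by linarith) 3 i hM (-x) (by linarith)
    have h3 := ff_taylor M (z / 2) z (by linarith) (by linarith) 3 i hM (-1 - x) (by linarith)
    have e1 : |(-1 : ℝ)| ^ 3 ≤ 1 := by norm_num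
    have e2 : |(-x : ℝ)| ^ 3 ≤ 1 := by
      rw [abs_neg, abs_of_nonneg hx0]; exact pow_le_one₀ hx0 hx1
    have e3 : |(-1 - x : ℝ)| ^ 3 ≤ 8 := by
      have : |(-1 - x : ℝ)| ≤ 2 := by rw [abs_le]; constructor <;> linarith
      calc _ ≤ (2 : ℝ) ^ 3 := by gcongr
        _ = 8 := by norm_num
    replace h1 := h1.trans (mul_le_mul_of_nonneg_left e1 hM0)
    replace h2 := h2.trans (mul_le_mul_of_nonneg_left e2 hM0)
    replace h3 := h3.trans (mul_le_mul_of_nonneg_left e3 hM0)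
    simp only [sum_range_succ, sum_range_zero, Nat.factorial] at h1 h2 h3
    norm_num at h1 h2 h3
    rw [← sub_eq_add_neg] at h1 h2
    rw [show z + (-1 - x) = z - 1 - x by ring] at h3
    rw [mul_div_assoc]
    refine le_trans ?_ (mul_le_mul_of_nonneg_left hMz (by norm_num : (0:ℝ) ≤ 10))
    rw [abs_le] at *
    constructor <;> nlinarith [h1.1, h1.2, h2.1, h2.2, h3.1, h3.2]
  choose C hC0 hC using one
  refine ⟨∑ k ∈ range (K + 1), |aa k| * C (2 * k) + ∑ k ∈ range K, |aa (k + 1)| * Nat.factorial (2 * k + 1),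
    add_nonneg (sum_nonneg fun k _ => mul_nonneg (abs_nonneg _) (hC0 _)) (by positivity), fun z x hz hx0 hx1 => ?_⟩
  have hz0 : 0 < z := by linarith
  have hsplit : Lam K z - Lam K (z - 1) - Lam K (z - x) + Lam K (z - 1 - x) - x * Real.log z =
      ∑ k ∈ range (K + 1), aa k * (ff (2 * k) z - ff (2 * k) (z - 1) - ff (2 * k) (z - x) +
        ff (2 * k) (z - 1 - x) - x * ff (2 * k + 2) z) +
      ∑ k ∈ range K, aa (k + 1) * (x * ff (2 * k + 1 + 3) z) := by
    have h0 : x * Real.log z = ∑ k ∈ range (K + 1), aa k * (x * ff (2 * k + 2) z) -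
        ∑ k ∈ range K, aa (k + 1) * (x * ff (2 * k + 1 + 3) z) := by
      rw [sum_range_succ']
      simp only [show ∀ k, 2 * (k + 1) + 2 = 2 * k + 1 + 3 by intros; ring]
      simp [ff, aa]
    rw [h0]
    simp only [Lam, mul_sub, mul_add, sum_sub_distrib, sum_add_distrib]
    ring
  rw [hsplit, add_div, sum_div, sum_div]
  refine (abs_add_le _ _).trans (add_le_add ?_ ?_)
  · refine (abs_sum_le_sum_abs _ _).trans (sum_le_sum fun k hk => ?_)
    rw [abs_mul, mul_div_assoc]
    exact mul_le_mul_of_nonneg_left (hC (2 * k) z x hz hx0 hx1) (abs_nonneg _)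
  · refine (abs_sum_le_sum_abs _ _).trans (sum_le_sum fun k hk => ?_)
    rw [abs_mul, mul_div_assoc, abs_mul, abs_of_nonneg hx0]
    refine mul_le_mul_of_nonneg_left ?_ (abs_nonneg _)
    have := ff_bound (2 * k + 1) z z hz0 le_rfl
    calc x * |ff (2 * k + 1 + 3) z| ≤ 1 * |ff (2 * k + 1 + 3) z| := by gcongr
      _ ≤ (Nat.factorial (2 * k + 1) : ℝ) / z ^ (2 * k + 1 + 1) := by rw [one_mul]; exact this
      _ ≤ _ := by
        gcongr
        exact le_self_pow₀ (by linarith) (by omega)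

noncomputable def RR (K : ℕ) (z : ℝ) : ℝ := Real.log (Real.Gamma z) - (Lam K z - Lam K (z - 1))

lemma logGamma_add_one {y : ℝ} (hy : 0 < y) :
    Real.log (Real.Gamma (y + 1)) = Real.log (Real.Gamma y) + Real.log y := by
  rw [Real.Gamma_add_one hy.ne', Real.log_mul hy.ne' (Real.Gamma_pos_of_pos hy).ne', add_comm]

lemma RR_step (K : ℕ) : ∃ C : ℝ, 0 ≤ C ∧ ∀ z : ℝ, 2 ≤ z → ∀ n : ℕ,
    |RR K (z + n) - RR K z| ≤ C / z ^ (2 * K + 1) := by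
  obtain ⟨C, hC0, hC⟩ := Lam_second_diff K
  refine ⟨2 * C, by positivity, fun z hz n => ?_⟩
  have hz0 : 0 < z := by linarith
  have hstep : ∀ k : ℕ, |RR K (z + (k + 1 : ℕ)) - RR K (z + k)| ≤
      C / z ^ (2 * K) * (1 / (z + k - 1) - 1 / (z + (k + 1 : ℕ) - 1)) := by
    intro k
    have hk : (0 : ℝ) ≤ k := Nat.cast_nonneg k
    have h := hC (z + k) (by linarith)
    have e : RR K (z + (k + 1 : ℕ)) - RR K (z + k) =
        -(Lam K (z + k + 1) + Lam K (z + k - 1) - 2 * Lam K (z + k) - Real.log (z + k)) := by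
      have := logGamma_add_one (y := z + k) (by linarith)
      simp only [RR]
      push_cast
      rw [← add_assoc, this, show z + (k : ℝ) + 1 - 1 = z + k by ring]
      ring
    rw [e, abs_neg]
    refine h.trans ?_
    have hpos : 0 < z + k - 1 := by linarith
    have hpos' : 0 < z + k := by linarith
    have e2 : 1 / (z + k - 1) - 1 / (z + ((k + 1 : ℕ) : ℝ) - 1) = 1 / ((z + k - 1) * (z + k)) := by
      push_cast
      rw [show z + ((k : ℝ) + 1) - 1 = z + k by ring]
      field_simp
      ring
    rw [e2, pow_add, div_mul_div_comm, mul_one]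
    gcongr
    · linarith
    · nlinarith
  have hsum : RR K (z + n) - RR K z = ∑ k ∈ range n, (RR K (z + (k + 1 : ℕ)) - RR K (z + k)) := by
    rw [sum_range_sub (fun k : ℕ => RR K (z + k))]
    simp
  rw [hsum]
  refine (abs_sum_le_sum_abs _ _).trans ((sum_le_sum fun k _ => hstep k).trans ?_)
  rw [← mul_sum, sum_range_sub' (fun k : ℕ => 1 / (z + (k : ℝ) - 1))]
  have hn : (0 : ℝ) ≤ n := Nat.cast_nonneg n
  have h1 : 0 ≤ 1 / (z + n - 1) := by
    apply div_nonneg zero_le_one; linarith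
  have h2 : 1 / (z - 1) ≤ 2 / z := by
    rw [div_le_div_iff₀ (by linarith) hz0]; linarith
  calc C / z ^ (2 * K) * (1 / (z + (0 : ℕ) - 1) - 1 / (z + n - 1)) ≤ C / z ^ (2 * K) * (2 / z) := by
        gcongr
        simp only [Nat.cast_zero, add_zero]
        linarith
    _ = 2 * C / z ^ (2 * K + 1) := by
        rw [pow_succ]; field_simp

lemma logGamma_diff (n : ℕ) (hn : 2 ≤ n) (x : ℝ) (hx0 : 0 ≤ x) (hx1 : x < 1) :
    |Real.log (Real.Gamma ((n + 1 : ℕ) : ℝ)) - Real.log (Real.Gamma (((n + 1 : ℕ) : ℝ) - x)) -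
      x * Real.log ((n + 1 : ℕ) : ℝ)| ≤ 2 / ((n : ℝ) - 1) := by
  have hfeq : ∀ {y : ℝ}, 0 < y → (Real.log ∘ Real.Gamma) (y + 1) =
      (Real.log ∘ Real.Gamma) y + Real.log y := fun hy => logGamma_add_one hy
  have hn2 : (2 : ℝ) ≤ n := by exact_mod_cast hn
  have h1 := Real.BohrMollerup.f_add_nat_le Real.convexOn_log_Gamma hfeq (n := n) (x := 1 - x)
    (by omega) (by linarith) (by linarith)
  have h2 := Real.BohrMollerup.f_add_nat_ge Real.convexOn_log_Gamma hfeq (n := n) (x := 1 - x)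
    hn (by linarith)
  have h3 := logGamma_add_one (y := n) (by linarith)
  simp only [Function.comp] at h1 h2
  push_cast
  rw [h3, show (n : ℝ) + 1 - x = n + (1 - x) by ring]
  have l1 : Real.log (n - 1) ≤ Real.log n := Real.log_le_log (by linarith) (by linarith)
  have l2 : Real.log n ≤ Real.log (n + 1) := Real.log_le_log (by linarith) (by linarith)
  have l3 : Real.log (n + 1) - Real.log (n - 1) ≤ 2 / ((n : ℝ) - 1) := by
    rw [← Real.log_div (by linarith) (by linarith)]
    refine (Real.log_le_sub_one_of_pos (by apply div_pos <;> linarith)).trans (le_of_eq ?_)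
    have : (n : ℝ) - 1 ≠ 0 := by linarith
    field_simp
    ring
  rw [abs_le]
  constructor <;> nlinarith

lemma RR_diff (K : ℕ) : ∃ C : ℝ, 0 ≤ C ∧ ∀ (i : ℕ) (x : ℝ), 4 ≤ i → 0 ≤ x → x < 1 →
    |RR K (i - x) - RR K i| ≤ C / (i : ℝ) ^ (2 * K + 1) := by
  obtain ⟨C, hC0, hC⟩ := RR_step K
  obtain ⟨C', hC0', hC'⟩ := Lam_mixed_diff K
  refine ⟨C * 2 ^ (2 * K + 1) + C, by positivity, fun i x hi hx0 hx1 => ?_⟩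
  have hi' : (4 : ℝ) ≤ i := by exact_mod_cast hi
  have hlim : ∀ k : ℕ, |RR K (i - x) - RR K i| ≤ (C * 2 ^ (2 * K + 1) + C) / (i : ℝ) ^ (2 * K + 1) +
      (C' + 4) * (1 / ((k : ℝ) + 1)) := by
    intro k
    have hk : (0 : ℝ) ≤ k := Nat.cast_nonneg k
    have a1 := hC (i - x) (by linarith) k
    have a2 := hC i (by linarith) k
    have a3 : C / (i - x) ^ (2 * K + 1) ≤ C * 2 ^ (2 * K + 1) / (i : ℝ) ^ (2 * K + 1) := by
      rw [mul_div_assoc, ← div_pow, div_eq_mul_inv, ← inv_pow]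
      have b1 : 0 ≤ ((i : ℝ) - x)⁻¹ := inv_nonneg.mpr (by linarith)
      have b2 : ((i : ℝ) - x)⁻¹ ≤ 2 / i := by
        rw [inv_eq_one_div, div_le_div_iff₀ (by linarith) (by linarith)]
        linarith
      gcongr
    have a4 := hC' (i + k) x (by linarith) hx0 hx1.le
    have a5 := logGamma_diff (i + k - 1) (by omega) x hx0 hx1
    rw [show i + k - 1 + 1 = i + k by omega] at a5
    have a6 : ((i + k - 1 : ℕ) : ℝ) = i + k - 1 := by
      rw [Nat.cast_sub (by omega)]; push_cast; ring
    rw [a6] at a5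
    push_cast at a5
    have a7 : C' / (i + k) ≤ C' * (1 / ((k : ℝ) + 1)) := by
      rw [div_eq_mul_one_div]
      exact mul_le_mul_of_nonneg_left (one_div_le_one_div_of_le (by linarith) (by linarith)) hC0'
    have a8 : 2 / ((i : ℝ) + k - 1 - 1) ≤ 4 * (1 / ((k : ℝ) + 1)) := by
      rw [mul_one_div, div_le_div_iff₀ (by linarith) (by linarith)]
      linarith
    have e : RR K (i - x + k) - RR K (i + k) =
        (Lam K (i + k) - Lam K (i + k - 1) - Lam K (i + k - x) + Lam K (i + k - 1 - x) -
          x * Real.log (i + k)) -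
        (Real.log (Real.Gamma (i + k)) - Real.log (Real.Gamma (i + k - x)) - x * Real.log (i + k)) := by
      simp only [RR]
      rw [show (i : ℝ) - x + k = i + k - x by ring, show (i : ℝ) + k - x - 1 = i + k - 1 - x by ring]
      ring
    rw [add_div]
    rw [abs_le] at *
    constructor <;> linarith [a1.1, a1.2, a2.1, a2.2, a4.1, a4.2, a5.1, a5.2]
  have ht := (tendsto_one_div_add_atTop_nhds_zero_nat (𝕜 := ℝ)).const_mul (C' + 4)
  have ht2 := ht.const_add ((C * 2 ^ (2 * K + 1) + C) / (i : ℝ) ^ (2 * K + 1))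
  rw [mul_zero, add_zero] at ht2
  exact ge_of_tendsto' ht2 hlim

/-- the Gamma-product sum. -/
lemma gamma_sum (K : ℕ) : ∃ C : ℝ, 0 ≤ C ∧ ∀ (n m : ℕ) (x : ℝ), n < m → 4 ≤ m - n → 0 ≤ x → x < 1 →
    |∑ j ∈ range n, (Real.log (Real.Gamma ((m : ℝ) - n + 1 - x + j)) -
        Real.log (Real.Gamma ((m : ℝ) - n + 1 + j))) -
      ((Lam K (m - x) - Lam K m) - (Lam K (m - n - x) - Lam K (m - n)))| ≤
      C * n / ((m : ℝ) - n) ^ (2 * K + 1) := by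
  obtain ⟨C, hC0, hC⟩ := RR_diff K
  refine ⟨C, hC0, fun n m x hnm h4 hx0 hx1 => ?_⟩
  have hw : (4 : ℝ) ≤ (m : ℝ) - n := by
    rw [← Nat.cast_sub hnm.le]; exact_mod_cast h4
  have htel : (Lam K (m - x) - Lam K m) - (Lam K (m - n - x) - Lam K (m - n)) =
      ∑ j ∈ range n, ((Lam K ((m : ℝ) - n + (j + 1 : ℕ) - x) - Lam K ((m : ℝ) - n + (j + 1 : ℕ))) -
        (Lam K ((m : ℝ) - n + (j : ℕ) - x) - Lam K ((m : ℝ) - n + (j : ℕ)))) := by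
    rw [sum_range_sub (fun j : ℕ => Lam K ((m : ℝ) - n + j - x) - Lam K ((m : ℝ) - n + j))]
    simp
  rw [htel, ← sum_sub_distrib]
  refine (abs_sum_le_sum_abs _ _).trans ?_
  have : ∀ j ∈ range n, |(Real.log (Real.Gamma ((m : ℝ) - n + 1 - x + j)) -
        Real.log (Real.Gamma ((m : ℝ) - n + 1 + j))) -
        ((Lam K ((m : ℝ) - n + (j + 1 : ℕ) - x) - Lam K ((m : ℝ) - n + (j + 1 : ℕ))) -
        (Lam K ((m : ℝ) - n + (j : ℕ) - x) - Lam K ((m : ℝ) - n + (j : ℕ))))| ≤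
      C / ((m : ℝ) - n) ^ (2 * K + 1) := by
    intro j _
    have h := hC (m - n + (j + 1)) x (by omega) hx0 hx1
    push_cast [Nat.cast_sub hnm.le] at h
    have hj : (0 : ℝ) ≤ j := Nat.cast_nonneg j
    have h2 : C / ((m : ℝ) - n + (j + 1)) ^ (2 * K + 1) ≤ C / ((m : ℝ) - n) ^ (2 * K + 1) := by
      gcongr
      linarith
    refine le_trans (le_of_eq ?_) (h.trans h2)
    simp only [RR]
    push_cast
    rw [show (m : ℝ) - n + 1 - x + j = m - n + (j + 1) - x by ring,
      show (m : ℝ) - n + 1 + j = m - n + (j + 1) by ring,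
      show (m : ℝ) - n + (j + 1) - x - 1 = m - n + j - x by ring,
      show (m : ℝ) - n + (j + 1) - 1 = m - n + j by ring]
    congr 1
    ring
  refine (sum_le_sum this).trans (le_of_eq ?_)
  rw [sum_const, card_range, nsmul_eq_mul]
  ring

noncomputable def SS (q : ℕ) (z x : ℝ) : ℝ :=
  ∑ k ∈ range (q + 1), aa k * (ff (k + q + 1) z * (-x) ^ (q + 1 - k) / (Nat.factorial (q + 1 - k)))

lemma Lam_taylor (N : ℕ) (d p : ℝ) (hd : 0 < d) (hp : 0 ≤ p) : ∃ C : ℝ, 0 ≤ C ∧ ∀ n : ℝ, 0 < n →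
    p / n ≤ n / d / 2 →
    |Lam (N + 2) (n / d - p / n) - Lam (N + 2) (n / d) - ∑ q ∈ range (N + 2), SS q (n / d) (p / n)|
      ≤ C / n ^ (2 * N + 4) := by
  refine ⟨∑ k ∈ range (N + 2 + 1), |aa k| *
    ((Nat.factorial (N + k)) * (2 * d) ^ (N + k + 1) * p ^ (N + 3 - k)), by positivity,
    fun n hn hx => ?_⟩
  set z := n / d with hz
  set x := p / n with hxd
  have hz0 : 0 < z := by positivity
  have hx0 : 0 ≤ x := by positivity
  have hmain : ∑ q ∈ range (N + 2), SS q z x = ∑ k ∈ range (N + 2 + 1), ∑ r ∈ range (N + 2 - k),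
      aa k * (ff (2 * k + (r + 1)) z * (-x) ^ (r + 1) / (Nat.factorial (r + 1))) := by
    rw [sum_range_succ _ (N + 2), Nat.sub_self, sum_range_zero, add_zero, 
      ← sum_range_diag_flip (N + 2) (fun k r =>
        aa k * (ff (2 * k + (r + 1)) z * (-x) ^ (r + 1) / (Nat.factorial (r + 1))))]
    refine sum_congr rfl fun q _ => sum_congr rfl fun k hk => ?_
    rw [mem_range] at hk
    rw [show 2 * k + (q - k + 1) = k + q + 1 by omega, show q - k + 1 = q + 1 - k by omega]
  rw [hmain, Lam, Lam, ← sum_sub_distrib, ← sum_sub_distrib, sum_div]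
  refine (abs_sum_le_sum_abs _ _).trans (sum_le_sum fun k hk => ?_)
  rw [mem_range] at hk
  have h := ff_taylor ((Nat.factorial (N + k) : ℝ) / (z / 2) ^ (N + k + 1)) (z / 2) z (by linarith)
    (by linarith) (N + 2 - k + 1) (2 * k) (fun y hy => by
      rw [show 2 * k + (N + 2 - k + 1) = N + k + 3 by omega]
      exact ff_bound (N + k) (z / 2) y (by linarith) hy) (-x) (by linarith)
  rw [sum_range_succ'] at h
  simp only [add_zero, pow_zero, mul_one, Nat.factorial_zero, Nat.cast_one, div_one] at h
  rw [← mul_sum, ← mul_sub, ← mul_sub, abs_mul, mul_div_assoc]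
  gcongr
  rw [← sub_eq_add_neg] at h
  rw [show ∀ a b c : ℝ, a - b - c = a - (c + b) by intros; ring]
  refine h.trans (le_of_eq ?_)
  rw [abs_neg, abs_of_nonneg hx0, hz, hxd, show N + 2 - k + 1 = N + 3 - k by omega,
    show 2 * N + 4 = (N + k + 1) + (N + 3 - k) by omega, pow_add, mul_pow]
  simp only [div_pow]
  field_simp
  ring

lemma SS_ge2 (q : ℕ) (n d p : ℝ) (hn : 0 < n) (hd : 0 < d) : SS (q + 2) (n / d) (p / n) =
    (∑ k ∈ range (q + 3), aa k * (-((Nat.factorial (k + q) : ℝ) / (Nat.factorial (q + 3 - k))) *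
      p ^ (q + 3 - k) * d ^ (k + q + 1))) / n ^ (2 * (q + 2)) := by
  rw [SS, sum_div]
  refine sum_congr rfl fun k hk => ?_
  rw [mem_range] at hk
  rw [mul_div_assoc (aa k) _ (n ^ _)]
  congr 1
  rw [show k + (q + 2) + 1 = (k + q) + 3 by ring, show q + 2 + 1 - k = q + 3 - k by omega,
    show 2 * (q + 2) = (k + q + 1) + (q + 3 - k) by omega, pow_add, neg_pow, div_pow]
  simp only [ff, div_pow]
  have e : (-1 : ℝ) ^ (k + q) * (-1) ^ (q + 3 - k) = -1 := by
    rw [← pow_add, show k + q + (q + 3 - k) = 2 * (q + 1) + 1 by omega, pow_succ, pow_mul]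
    simp
  field_simp
  linear_combination (d * d ^ (k + q) * p ^ (q + 3 - k) * n * n ^ (k + q) * n ^ (q + 3 - k)) * e

lemma rf_fact (l s : ℕ) : risingFactorial (l + 1) s * (Nat.factorial l) = Nat.factorial (l + s) := by
  induction s with
  | zero => simp [risingFactorial]
  | succ s ih =>
    rw [risingFactorial, prod_range_succ, ← risingFactorial, ← add_assoc l s 1, Nat.factorial_succ]
    push_cast
    rw [← ih]
    ring

lemma bern_term (i s : ℕ) (p c : ℝ) (hc1 : c < 1) :
    aa (i + 2) * (-((Nat.factorial (2 * i + 1 + s) : ℝ) / (Nat.factorial s)) * p ^ s *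
      c ^ (2 * i + 2 + s)) - aa (i + 2) * (-((Nat.factorial (2 * i + 1 + s) : ℝ) / (Nat.factorial s)) *
      p ^ s * (c / (1 - c)) ^ (2 * i + 2 + s)) =
    (bernoulli (2 * i + 4) : ℝ) * c ^ (2 * i + 2) * risingFactorial (2 * i + 2) s * (p * c) ^ s /
      (4 * (i + 1) * (i + 2) * (Nat.factorial s)) * (1 - ((1 - c) ^ (2 * i + 2 + s))⁻¹) := by
  have h1 : 1 - c ≠ 0 := by linarith
  rw [← rf_fact, aa, show 2 * (i + 2) = 2 * i + 1 + 1 + 1 + 1 by ring, Nat.factorial_succ,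
    Nat.factorial_succ, Nat.factorial_succ]
  push_cast
  rw [div_pow, mul_pow, show 2 * i + 1 + 1 = 2 * i + 2 by ring, show 2 * i + 2 + 1 + 1 = 2 * i + 4 by ring]
  have h2 : (Nat.factorial (2 * i + 1) : ℝ) ≠ 0 := by positivity
  have h3 : (i : ℝ) + 1 ≠ 0 := by positivity
  have h4 : (i : ℝ) + 2 ≠ 0 := by positivity
  have h5 : 2 * (i : ℝ) + 1 + 1 ≠ 0 := by positivity
  have h6 : 2 * (i : ℝ) + 1 + 1 + 1 ≠ 0 := by positivity
  have h7 : 2 * (i : ℝ) + 1 + 1 + 1 + 1 ≠ 0 := by positivity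
  field_simp
  ring

lemma aa_zero : aa 0 = 1 := by simp [aa]
lemma aa_one : aa 1 = -1 / 12 := by simp [aa, bernoulli_two]; norm_num

lemma SS_diff_ge2 (q p : ℕ) (n c : ℝ) (hn : 0 < n) (hc0 : 0 < c) (hc1 : c < 1) :
    SS (q + 2) (n / c) (p / n) - SS (q + 2) (n / (c / (1 - c))) (p / n) =
    (Acoef p c (q + 2) + (c ^ (q + 2) / ((q + 2 : ℕ) : ℝ)) * ∑ j ∈ Finset.Icc 1 p, (j : ℝ) ^ (q + 2))
      / n ^ (2 * (q + 2)) := by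
  have h1 : 0 < 1 - c := by linarith
  rw [SS_ge2 q n c p hn hc0, SS_ge2 q n (c / (1 - c)) p hn (by positivity), ← sub_div,
    ← sum_sub_distrib]
  congr 1
  rw [sum_range_succ', sum_range_succ', Acoef]
  have hsum : ∑ j ∈ Finset.Icc 1 (q + 1),
            (bernoulli (2 * j + 2) : ℝ) * c ^ (2 * j) * risingFactorial (2 * j) (q + 2 - j)
              * (p * c) ^ (q + 2 - j)
              / (4 * j * (j + 1) * (Nat.factorial (q + 2 - j)))
              * (1 - (1 - c) ^ (-(j : ℤ) - (q + 2 : ℤ))) =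
      ∑ k ∈ range (q + 1),
        (aa (k + 1 + 1) * (-((Nat.factorial (k + 1 + 1 + q) : ℝ) / (Nat.factorial (q + 3 - (k + 1 + 1)))) *
          (p : ℝ) ^ (q + 3 - (k + 1 + 1)) * c ^ (k + 1 + 1 + q + 1)) -
        aa (k + 1 + 1) * (-((Nat.factorial (k + 1 + 1 + q) : ℝ) / (Nat.factorial (q + 3 - (k + 1 + 1)))) *
          (p : ℝ) ^ (q + 3 - (k + 1 + 1)) * (c / (1 - c)) ^ (k + 1 + 1 + q + 1))) := by
    rw [show Finset.Icc 1 (q + 1) = Finset.Ico 1 (q + 2) from rfl, sum_Ico_eq_sum_range]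
    refine sum_congr rfl fun i hi => ?_
    rw [mem_range] at hi
    obtain ⟨s, hs⟩ : ∃ s, q + 1 = i + s := ⟨q + 1 - i, by omega⟩
    have hbt := bern_term i s p c hc1
    rw [show q + 3 - (i + 1 + 1) = s by omega, show i + 1 + 1 + q = 2 * i + 1 + s by omega,
      show 2 * i + 1 + s + 1 = 2 * i + 2 + s by ring, show i + 1 + 1 = i + 2 by ring, hbt,
      show q + 2 - (1 + i) = s by omega, show 2 * (1 + i) = 2 * i + 2 by ring]
    have hz : (1 - c) ^ (-((1 + i : ℕ) : ℤ) - ((q : ℤ) + 2)) = ((1 - c) ^ (2 * i + 2 + s))⁻¹ := by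
      rw [← zpow_natCast, ← zpow_neg]
      congr 1
      push_cast
      omega
    rw [hz]
    push_cast
    rw [show (4 : ℝ) * (1 + i) * (1 + i + 1) = 4 * (i + 1) * (i + 2) by ring]
  rw [hsum]
  simp only [zero_add, aa_zero, aa_one, Nat.sub_zero]
  rw [show q + 3 - 1 = q + 2 by omega, show 1 + q = q + 1 by ring, Nat.factorial_succ (q + 2),
    Nat.factorial_succ (q + 1), Nat.factorial_succ q]
  have h2 : (Nat.factorial q : ℝ) ≠ 0 := by positivity
  have h3 : (q : ℝ) + 1 ≠ 0 := by positivity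
  have h4 : (q : ℝ) + 2 ≠ 0 := by positivity
  have h4' : (q : ℝ) + 1 + 1 ≠ 0 := by positivity
  have h5' : (q : ℝ) + 1 + 1 + 1 ≠ 0 := by positivity
  have h5 : (q : ℝ) + 3 ≠ 0 := by positivity
  have h6 : (q : ℝ) + 2 + 1 ≠ 0 := by positivity
  have h1' := h1.ne'
  push_cast
  have e : ((q : ℝ) + 2) ^ 2 - 1 = (q + 1) * (q + 3) := by ring
  rw [e]
  rw [div_pow, div_pow, mul_pow]
  field_simp
  ring

lemma SS_diff_zero (p : ℕ) (n c : ℝ) (hn : 0 < n) (hc0 : 0 < c) (hc1 : c < 1) :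
    SS 0 (n / c) (p / n) - SS 0 (n / (c / (1 - c))) (p / n) = Acoef p c 0 - p * Real.log (n / c) := by
  have h1 : 0 < 1 - c := by linarith
  have hl : Real.log (n / (c / (1 - c))) = Real.log (n / c) + Real.log (1 - c) := by
    rw [← Real.log_mul (by positivity) (by positivity)]
    congr 1
    field_simp
  simp only [SS, Acoef, zero_add, range_one, sum_singleton, aa_zero, ff, Nat.sub_zero, hl]
  simp
  field_simp
  ring

lemma SS_diff_one (p : ℕ) (n c : ℝ) (hn : 0 < n) (hc0 : 0 < c) (hc1 : c < 1) :
    SS 1 (n / c) (p / n) - SS 1 (n / (c / (1 - c))) (p / n) =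
      (Acoef p c 1 + c ^ 1 / ((1 : ℕ) : ℝ) * ∑ j ∈ Finset.Icc 1 p, (j : ℝ) ^ 1) / n ^ (2 * 1) := by
  have h1 : 0 < 1 - c := by linarith
  have h1' : c - 1 ≠ 0 := by linarith
  have hl : Real.log (n / (c / (1 - c))) = Real.log (n / c) + Real.log (1 - c) := by
    rw [← Real.log_mul (by positivity) (by positivity)]
    congr 1
    field_simp
  have hs : ∑ j ∈ Finset.Icc 1 p, (j : ℝ) ^ 1 = p * (p + 1) / 2 := by
    clear * -
    induction p with
    | zero => simp
    | succ p ih =>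
      rw [sum_Icc_succ_top (by omega), ih]
      push_cast
      ring
  rw [hs]
  simp only [SS, Acoef, sum_range_succ, range_zero, sum_empty, zero_add, aa_zero, aa_one, ff,
    Nat.sub_zero, hl, show (1 + 1 : ℕ) = 2 from rfl, show (2 - 1 : ℕ) = 1 from rfl]
  have e : (c - 1) = -(1 - c) := by ring
  rw [e]
  simp
  field_simp
  ring

lemma SS_diff_succ (q p : ℕ) (n c : ℝ) (hn : 0 < n) (hc0 : 0 < c) (hc1 : c < 1) :
    SS (q + 1) (n / c) (p / n) - SS (q + 1) (n / (c / (1 - c))) (p / n) =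
    (Acoef p c (q + 1) + (c ^ (q + 1) / ((q + 1 : ℕ) : ℝ)) * ∑ j ∈ Finset.Icc 1 p, (j : ℝ) ^ (q + 1))
      / n ^ (2 * (q + 1)) := by
  rcases q with _ | q
  · exact SS_diff_one p n c hn hc0 hc1
  · exact SS_diff_ge2 q p n c hn hc0 hc1

lemma gamma_ratio (X : ℝ) (p : ℕ) (hX : p < X) :
    Real.log (Real.Gamma X) - Real.log (Real.Gamma (X - p)) = ∑ j ∈ Finset.Icc 1 p, Real.log (X - j) := by
  induction p with
  | zero => simp
  | succ p ih =>
    push_cast at hX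
    rw [sum_Icc_succ_top (by omega), ← ih (by linarith)]
    have := logGamma_add_one (y := X - (p + 1 : ℕ)) (by push_cast; linarith)
    rw [show X - ((p + 1 : ℕ) : ℝ) + 1 = X - p by push_cast; ring] at this
    rw [this]
    ring

lemma log_part (N p : ℕ) (n c : ℝ) (hn : 0 < n) (hc0 : 0 < c) (h : p * c / n ^ 2 ≤ 1 / 2) :
    |∑ j ∈ Finset.Icc 1 p, Real.log (n / c * n - j) - p * Real.log (n / c) - p * Real.log n +
      ∑ q ∈ range (N + 1), (c ^ (q + 1) / ((q + 1 : ℕ) : ℝ)) * (∑ j ∈ Finset.Icc 1 p, (j : ℝ) ^ (q + 1))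
        / n ^ (2 * (q + 1))| ≤ (2 * ∑ j ∈ Finset.Icc 1 p, ((j : ℝ) * c) ^ (N + 2)) / n ^ (2 * N + 4) := by
  have hy : ∀ j ∈ Finset.Icc 1 p, 0 ≤ (j : ℝ) * c / n ^ 2 ∧ (j : ℝ) * c / n ^ 2 ≤ 1 / 2 := by
    intro j hj
    have : (j : ℝ) ≤ p := by exact_mod_cast (mem_Icc.mp hj).2
    refine ⟨by positivity, le_trans ?_ h⟩
    gcongr
  have e : ∑ j ∈ Finset.Icc 1 p, Real.log (n / c * n - j) - p * Real.log (n / c) - p * Real.log n +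
      ∑ q ∈ range (N + 1), (c ^ (q + 1) / ((q + 1 : ℕ) : ℝ)) * (∑ j ∈ Finset.Icc 1 p, (j : ℝ) ^ (q + 1))
        / n ^ (2 * (q + 1)) = ∑ j ∈ Finset.Icc 1 p, (∑ i ∈ range (N + 1),
          ((j : ℝ) * c / n ^ 2) ^ (i + 1) / (i + 1) + Real.log (1 - (j : ℝ) * c / n ^ 2)) := by
    rw [sum_add_distrib, sum_comm]
    have e1 : ∑ j ∈ Finset.Icc 1 p, Real.log (n / c * n - j) =
        ∑ j ∈ Finset.Icc 1 p, (Real.log (n / c) + Real.log n + Real.log (1 - (j : ℝ) * c / n ^ 2)) := by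
      refine sum_congr rfl fun j hj => ?_
      have := hy j hj
      rw [← Real.log_mul (by positivity) (by positivity), ← Real.log_mul (by positivity) (by linarith)]
      congr 1
      field_simp
    rw [e1, sum_add_distrib, sum_const, Nat.card_Icc, nsmul_eq_mul]
    have e2 : ∀ q ∈ range (N + 1), (c ^ (q + 1) / ((q + 1 : ℕ) : ℝ)) *
        (∑ j ∈ Finset.Icc 1 p, (j : ℝ) ^ (q + 1)) / n ^ (2 * (q + 1)) =
        ∑ j ∈ Finset.Icc 1 p, ((j : ℝ) * c / n ^ 2) ^ (q + 1) / (q + 1) := by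
      intro q _
      rw [mul_sum, sum_div]
      refine sum_congr rfl fun j _ => ?_
      push_cast
      rw [div_pow, mul_pow, pow_mul]
      ring
    rw [sum_congr rfl e2]
    push_cast [Nat.add_sub_cancel]
    ring
  rw [e, mul_sum, sum_div]
  refine (abs_sum_le_sum_abs _ _).trans (sum_le_sum fun j hj => ?_)
  obtain ⟨y0, y1⟩ := hy j hj
  have habs : |(j : ℝ) * c / n ^ 2| = (j : ℝ) * c / n ^ 2 := abs_of_nonneg y0
  refine (Real.abs_log_sub_add_sum_range_le (by rw [habs]; linarith) (N + 1)).trans ?_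
  rw [habs]
  have e3 : (2 * ((j : ℝ) * c) ^ (N + 2)) / n ^ (2 * N + 4) = ((j : ℝ) * c / n ^ 2) ^ (N + 2) * 2 := by
    rw [div_pow, ← pow_mul, show 2 * (N + 2) = 2 * N + 4 by ring]
    ring
  rw [e3, div_eq_mul_inv]
  have : (1 - (j : ℝ) * c / n ^ 2)⁻¹ ≤ 2 := by
    rw [inv_le_comm₀ (by linarith) (by norm_num)]; linarith
  gcongr

lemma log_mu0_eq (p n m : ℕ) (hn : p < n) (hm : n < m) (hpm : (p : ℝ) < (m : ℝ) * n) :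
    0 < mu0 p n m ∧ Real.log (mu0 p n m) =
      ∑ j ∈ Finset.Icc 1 p, Real.log ((m : ℝ) * n - j) - p * Real.log n +
      ∑ j ∈ range n, (Real.log (Real.Gamma ((m : ℝ) - n + 1 - p / n + j)) -
        Real.log (Real.Gamma ((m : ℝ) - n + 1 + j))) := by
  have hn0 : (0 : ℝ) < n := by exact_mod_cast (by omega : 0 < n)
  have hx : (p : ℝ) / n < 1 := by
    rw [div_lt_one hn0]; exact_mod_cast hn
  have hx0 : (0 : ℝ) ≤ (p : ℝ) / n := by positivity
  have hmn : (n : ℝ) < m := by exact_mod_cast hm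
  have g1 : 0 < Real.Gamma ((m : ℝ) * n) := Real.Gamma_pos_of_pos (by
    have : (0 : ℝ) ≤ p := Nat.cast_nonneg p
    linarith)
  have g2 : 0 < Real.Gamma ((m : ℝ) * n - p) := Real.Gamma_pos_of_pos (by linarith)
  have g3 : ∀ j : ℕ, 0 < Real.Gamma ((m : ℝ) - n + 1 - p / n + j) := fun j =>
    Real.Gamma_pos_of_pos (by have : (0 : ℝ) ≤ j := Nat.cast_nonneg j
                              linarith)
  have g4 : ∀ j : ℕ, 0 < Real.Gamma ((m : ℝ) - n + 1 + j) := fun j =>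
    Real.Gamma_pos_of_pos (by have : (0 : ℝ) ≤ j := Nat.cast_nonneg j
                              linarith)
  have hprod : 0 < ∏ j ∈ Finset.range n,
      Real.Gamma ((m : ℝ) - n + 1 - p / n + j) / Real.Gamma ((m : ℝ) - n + 1 + j) :=
    prod_pos fun j _ => div_pos (g3 j) (g4 j)
  refine ⟨by rw [mu0]; positivity, ?_⟩
  rw [mu0, Real.log_mul (by positivity) hprod.ne', Real.log_div g1.ne' (by positivity),
    Real.log_mul (by positivity) g2.ne', Real.log_pow, Real.log_prod (fun j _ => (div_pos (g3 j) (g4 j)).ne'),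
    ← gamma_ratio _ p hpm]
  rw [sum_congr rfl fun j _ => Real.log_div (g3 j).ne' (g4 j).ne']
  ring

lemma core (p : ℕ) (hp : 0 < p) (a b : ℕ) (ha : 0 < a) (hab : a < b) (N : ℕ) :
    ∃ C : ℝ, 0 ≤ C ∧ ∀ t : ℕ, p + 4 ≤ t →
      p < (a * t) * ((b * t) - (a * t) + 1) ∧ 0 < mu0 p (a * t) (b * t) ∧
      |Real.log (mu0 p (a * t) (b * t)) -
          ∑ q ∈ Finset.range (N + 2), Acoef p ((a : ℝ) / b) q / ((a * t : ℕ) : ℝ) ^ (2 * q)|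
        ≤ C / ((a * t : ℕ) : ℝ) ^ (2 * N + 4) := by
  set c : ℝ := (a : ℝ) / b with hc
  have ha' : (0 : ℝ) < a := by exact_mod_cast ha
  have hab' : (a : ℝ) < b := by exact_mod_cast hab
  have hb' : (0 : ℝ) < b := by linarith
  have hc0 : 0 < c := by positivity
  have hc1 : c < 1 := by rw [hc, div_lt_one hb']; exact hab'
  have h1c : 0 < 1 - c := by linarith
  set d : ℝ := c / (1 - c) with hd
  have hd0 : 0 < d := by positivity
  obtain ⟨C1, hC10, hC1⟩ := gamma_sum (N + 2)
  obtain ⟨C2, hC20, hC2⟩ := Lam_taylor N c p hc0 (Nat.cast_nonneg p)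
  obtain ⟨C3, hC30, hC3⟩ := Lam_taylor N d p hd0 (Nat.cast_nonneg p)
  set C4 : ℝ := 2 * ∑ j ∈ Finset.Icc 1 p, ((j : ℝ) * c) ^ (N + 2) with hC4
  have hC40 : 0 ≤ C4 := by positivity
  refine ⟨C1 * d ^ (2 * N + 5) + C2 + C3 + C4, by positivity, fun t ht => ?_⟩
  have hnt : t ≤ a * t := Nat.le_mul_of_pos_left t ha
  have hmw : b * t = (b - a) * t + a * t := by rw [← add_mul, Nat.sub_add_cancel hab.le]
  have hwt : t ≤ (b - a) * t := Nat.le_mul_of_pos_left t (by omega)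
  set n : ℕ := a * t with hn
  set m : ℕ := b * t with hm
  have hpn : p < n := by omega
  have hnm : n < m := by omega
  have hw4 : 4 ≤ m - n := by omega
  have hn0 : (0 : ℝ) < n := by exact_mod_cast (by omega : 0 < n)
  have hn2 : (2 : ℝ) ≤ n := by exact_mod_cast (by omega : 2 ≤ n)
  have hmc : (m : ℝ) = n / c := by
    rw [hm, hn, hc]; push_cast; field_simp
  have hwd : (m : ℝ) - n = n / d := by
    rw [hmc, hd]; field_simp
  have hw4' : (4 : ℝ) ≤ n / d := by
    rw [← hwd, ← Nat.cast_sub hnm.le]; exact_mod_cast hw4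
  have hm4 : (4 : ℝ) ≤ n / c := by
    rw [← hmc]; linarith
  have hx1 : (p : ℝ) / n < 1 := by
    rw [div_lt_one hn0]; exact_mod_cast hpn
  have hx0 : (0 : ℝ) ≤ (p : ℝ) / n := by positivity
  have hpm : (p : ℝ) < (m : ℝ) * n := by
    rw [div_lt_one hn0] at hx1
    have : (1 : ℝ) ≤ m := by linarith
    nlinarith
  obtain ⟨hpos, hlog⟩ := log_mu0_eq p n m hpn hnm hpm
  refine ⟨hpn.trans_le (Nat.le_mul_of_pos_right n (by omega)), hpos, ?_⟩
  have k1 := hC1 n m (p / n) hnm hw4 hx0 hx1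
  have k2 := hC2 n hn0 (by linarith)
  have k3 := hC3 n hn0 (by linarith)
  have k4 := log_part N p n c hn0 hc0 (by
    have : (p : ℝ) * c / n ^ 2 = (p / n) * (c * (1 / n)) := by field_simp
    rw [this]
    have h2 : 1 / (n : ℝ) ≤ 1 / 2 := one_div_le_one_div_of_le (by norm_num) hn2
    have h3 : 0 ≤ 1 / (n : ℝ) := by positivity
    calc (p : ℝ) / n * (c * (1 / n)) ≤ 1 * (1 * (1 / 2)) := by gcongr
      _ = 1 / 2 := by norm_num)
  rw [← hC4] at k4
  have k1' : C1 * n / ((m : ℝ) - n) ^ (2 * (N + 2) + 1) = C1 * d ^ (2 * N + 5) / n ^ (2 * N + 4) := by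
    rw [hwd, div_pow, show 2 * (N + 2) + 1 = 2 * N + 5 by ring, pow_succ (n : ℝ) (2 * N + 4)]
    field_simp
  rw [k1', hwd, hmc] at k1
  have hSS : ∑ q ∈ range (N + 2), SS q (n / c) (p / n) - ∑ q ∈ range (N + 2), SS q (n / d) (p / n) =
      ∑ q ∈ Finset.range (N + 2), Acoef p c q / (n : ℝ) ^ (2 * q) - p * Real.log (n / c) +
      ∑ q ∈ range (N + 1), (c ^ (q + 1) / ((q + 1 : ℕ) : ℝ)) * (∑ j ∈ Finset.Icc 1 p, (j : ℝ) ^ (q + 1))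
        / (n : ℝ) ^ (2 * (q + 1)) := by
    rw [← sum_sub_distrib, sum_range_succ', sum_range_succ' _ (N + 1), SS_diff_zero p n c hn0 hc0 hc1,
      sum_congr rfl fun q _ => SS_diff_succ q p n c hn0 hc0 hc1]
    simp only [add_div, sum_add_distrib]
    simp
    ring
  rw [hwd, hmc] at hlog
  rw [hlog]
  simp only [add_div]
  rw [abs_le] at *
  constructor <;> linarith [k1.1, k1.2, k2.1, k2.2, k3.1, k3.2, k4.1, k4.2]

/-- truncated asymptotic expansion of `ln μ0(p,n,m)` in inverse even powers
of `n`, along the sequence `n = a·t`, `m = b·t` with `c = a/b ∈ (0,1)`. -/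
theorem log_mu0_asymptotic_expansion (p : ℕ) (hp : 0 < p) (a b : ℕ) (ha : 0 < a)
    (hab : a < b) (N : ℕ) :
    ∃ C : ℝ, 0 < C ∧ ∃ T : ℕ, 0 < T ∧ ∀ t : ℕ, T ≤ t →
      p < (a * t) * ((b * t) - (a * t) + 1) ∧ 0 < mu0 p (a * t) (b * t) ∧
      |Real.log (mu0 p (a * t) (b * t)) -
          ∑ q ∈ Finset.range (N + 1), Acoef p ((a : ℝ) / b) q / ((a * t : ℕ) : ℝ) ^ (2 * q)|
        ≤ C / ((a * t : ℕ) : ℝ) ^ (2 * (N + 1)) := by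
  obtain ⟨C, hC0, hC⟩ := core p hp a b ha hab N
  refine ⟨C + |Acoef p ((a : ℝ) / b) (N + 1)| + 1, by positivity, p + 4, by omega, fun t ht => ?_⟩
  obtain ⟨h1, h2, h3⟩ := hC t ht
  refine ⟨h1, h2, ?_⟩
  have hn1 : (1 : ℝ) ≤ ((a * t : ℕ) : ℝ) := by
    exact_mod_cast Nat.mul_pos ha (by omega)
  set n : ℝ := ((a * t : ℕ) : ℝ)
  have hn0 : 0 < n := by linarith
  rw [sum_range_succ] at h3
  have e1 : C / n ^ (2 * N + 4) ≤ C / n ^ (2 * (N + 1)) := by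
    gcongr
    omega
  have e2 : |Acoef p ((a : ℝ) / b) (N + 1) / n ^ (2 * (N + 1))| =
      |Acoef p ((a : ℝ) / b) (N + 1)| / n ^ (2 * (N + 1)) := by
    rw [abs_div, abs_of_pos (pow_pos hn0 _)]
  have e3 : 0 ≤ 1 / n ^ (2 * (N + 1)) := by positivity
  rw [add_div, add_div, ← e2]
  set y := Acoef p ((a : ℝ) / b) (N + 1) / n ^ (2 * (N + 1))
  have y1 := le_abs_self y
  have y2 := neg_abs_le y
  rw [abs_le] at h3 ⊢
  constructor <;> linarith [h3.1, h3.2]
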